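/- Let p > 1 with 1/p + 1/q = 1, and let f, g be two positive continuous functions on [0, ∞) such that for x > 0 the integral I^{α,β,η,μ}_{x,k}[g] is finite. If 0 < m ≤ f(τ)/g(τ) for all τ ∈ (0, x), then I^{α,β,η,μ}_{x,k}[f^{1/p} g^{1/q}] ≥ m^{1/p} · I^{α,β,η,μ}_{x,k}[g]. -/

import Mathlib

/-!
On `(0, x)` the kernel is nonnegative: the parameters `α + β + μ`, `-η`, `α` of the hypergeometric
series are positive and its argument is nonnegative, so every term of the series is nonnegative.
Since `1/q = 1 - 1/p`, one has `f^(1/p) g^(1/q) = g (f/g)^(1/p) ≥ m^(1/p) g`, and integrating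
against the kernel gives the claim. The right-hand integrand is integrable because it is the
integrable one for `g` times the function `(f/g)^(1/p)`, which is continuous on `[0, x]`.
-/

open MeasureTheory Real Set

/-- The Gauss hypergeometric series `₂F₁(a, b; c; z)`. -/
noncomputable def gauss2F1 (a b c z : ℝ) : ℝ :=
  ∑' n : ℕ, ((ascPochhammer ℝ n).eval a * (ascPochhammer ℝ n).eval b /
    ((ascPochhammer ℝ n).eval c * (n.factorial : ℝ))) * z ^ n

/-- The kernel `F(x, τ)` of the generalized k-fractional integral operator. -/
noncomputable def Fker (α β η μ k x τ : ℝ) : ℝ :=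
  ((k + 1) ^ (μ + β + 1) * x ^ ((k + 1) * (-α - β - 2 * μ)) / Real.Gamma α) *
    τ ^ ((k + 1) * μ) * (x ^ (k + 1) - τ ^ (k + 1)) ^ (α - 1) *
    gauss2F1 (α + β + μ) (-η) α (1 - (τ / x) ^ (k + 1))

/-- The generalized k-fractional integral operator `I^{α,β,η,μ}_{x,k}[f]`. -/
noncomputable def genKInt (α β η μ k x : ℝ) (f : ℝ → ℝ) : ℝ :=
  ∫ τ in (0:ℝ)..x, Fker α β η μ k x τ * τ ^ k * f τ

lemma gauss2F1_nonneg {a b c z : ℝ} (ha : 0 < a) (hb : 0 < b) (hc : 0 < c) (hz : 0 ≤ z) :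
    0 ≤ gauss2F1 a b c z := by
  unfold gauss2F1
  refine tsum_nonneg fun n => ?_
  have h1 := ascPochhammer_pos n a ha
  have h2 := ascPochhammer_pos n b hb
  have h3 := ascPochhammer_pos n c hc
  positivity

lemma Fker_nonneg {α β η μ k x τ : ℝ} (hk : 0 ≤ k) (hα : 0 < α) (hαβ : 0 < α + β + μ)
    (hη : η < 0) (hτ : 0 < τ) (hτx : τ < x) : 0 ≤ Fker α β η μ k x τ := by
  have hx : 0 < x := hτ.trans hτx
  have hG := Real.Gamma_pos_of_pos hα
  have h1 : 0 ≤ x ^ (k + 1) - τ ^ (k + 1) :=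
    sub_nonneg.2 (Real.rpow_le_rpow hτ.le hτx.le (by linarith))
  have h2 : 0 ≤ 1 - (τ / x) ^ (k + 1) :=
    sub_nonneg.2 (Real.rpow_le_one (by positivity) ((div_le_one hx).2 hτx.le) (by linarith))
  have h3 := gauss2F1_nonneg hαβ (neg_pos.2 hη) hα h2
  unfold Fker
  positivity

lemma rpow_mul_rpow_conj {p q a b : ℝ} (hpq : 1 / p + 1 / q = 1) (ha : 0 < a) (hb : 0 < b) :
    a ^ (1 / p) * b ^ (1 / q) = b * (a / b) ^ (1 / p) := by
  have hq : 1 / q = 1 - 1 / p := by linarith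
  rw [hq, Real.rpow_sub hb, Real.rpow_one, Real.div_rpow ha.le hb.le]
  ring

theorem lower_bound_mixed_g (α β η μ k x : ℝ)
    (hk : 0 ≤ k) (hα : max 0 (-β - μ) < α) (hβ : β < 1) (hμ : -1 < μ)
    (hη1 : β - 1 < η) (hη2 : η < 0) (hx : 0 < x) (p q m : ℝ) (f g : ℝ → ℝ)
    (hfc : ContinuousOn f (Ici 0)) (hgc : ContinuousOn g (Ici 0))
    (hfpos : ∀ t ∈ Ici (0:ℝ), 0 < f t) (hgpos : ∀ t ∈ Ici (0:ℝ), 0 < g t)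
    (hp : 1 < p) (hpq : 1 / p + 1 / q = 1) (hm : 0 < m)
    (hfin : IntervalIntegrable (fun τ => Fker α β η μ k x τ * τ ^ k * (g τ)) volume 0 x)
    (hbd : ∀ τ ∈ Ioo (0:ℝ) x, m ≤ f τ / g τ) :
    m ^ (1 / p) * (genKInt α β η μ k x (fun τ => g τ)) ≤
      genKInt α β η μ k x (fun τ => f τ ^ (1 / p) * g τ ^ (1 / q)) := by
  obtain ⟨hα0, hα1⟩ := max_lt_iff.1 hα
  have hp0 : 0 ≤ 1 / p := by positivity
  have hsub : uIcc 0 x ⊆ Ici (0:ℝ) := by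
    rw [uIcc_of_le hx.le]
    exact Icc_subset_Ici_self
  have hcont : ContinuousOn (fun τ => (f τ / g τ) ^ (1 / p)) (uIcc 0 x) :=
    ((hfc.div hgc fun t ht => (hgpos t ht).ne').rpow_const fun _ _ => Or.inr hp0).mono hsub
  have hint : IntervalIntegrable
      (fun τ => Fker α β η μ k x τ * τ ^ k * (f τ ^ (1 / p) * g τ ^ (1 / q))) volume 0 x := by
    refine (hfin.mul_continuousOn hcont).congr fun τ hτ => ?_
    have h0 : τ ∈ Ici (0:ℝ) := hsub (uIoc_subset_uIcc hτ)
    simp only [rpow_mul_rpow_conj hpq (hfpos τ h0) (hgpos τ h0)]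
    ring
  unfold genKInt
  rw [← intervalIntegral.integral_const_mul]
  refine intervalIntegral.integral_mono_on_of_le_Ioo hx.le (hfin.const_mul _) hint fun τ hτ => ?_
  have h0 : τ ∈ Ici (0:ℝ) := hτ.1.le
  have hg := hgpos τ h0
  have hK : 0 ≤ Fker α β η μ k x τ * τ ^ k * g τ :=
    mul_nonneg (mul_nonneg (Fker_nonneg hk hα0 (by linarith) hη2 hτ.1 hτ.2)
      (Real.rpow_nonneg h0 k)) hg.le
  calc m ^ (1 / p) * (Fker α β η μ k x τ * τ ^ k * g τ)
      ≤ (f τ / g τ) ^ (1 / p) * (Fker α β η μ k x τ * τ ^ k * g τ) :=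
        mul_le_mul_of_nonneg_right (Real.rpow_le_rpow hm.le (hbd τ hτ) hp0) hK
    _ = Fker α β η μ k x τ * τ ^ k * (f τ ^ (1 / p) * g τ ^ (1 / q)) := by
        rw [rpow_mul_rpow_conj hpq (hfpos τ h0) hg]
        ring
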